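/- Mutual information at low SNR: if σ² = L/(α log L) with 0 < α ≤ 2 fixed, then the single-sample mutual information in the MRA model satisfies I(X; Y) = o(log L), i.e., lim_{L→∞} I(X; Y)/log L = 0. -/

import Mathlib

open MeasureTheory ProbabilityTheory Filter
open scoped ENNReal

namespace MRAformal

/-- Standard Gaussian measure `N(0, I_L)` on `ℝ^L`. -/
noncomputable def stdGaussian (L : ℕ) : Measure (Fin L → ℝ) :=
  Measure.pi fun _ => gaussianReal 0 1

/-- Uniform distribution on `{0, …, L-1}`. -/
noncomputable def unifFin (L : ℕ) : Measure (Fin L) :=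
  ((L : ℝ≥0∞))⁻¹ • Measure.count

/-- Alignment distortion `ρ(x, x̂) = L⁻¹ min_ℓ ‖x - R_ℓ x̂‖²`,
where `(R_ℓ x̂)_j = x̂_{j+ℓ mod L}`. -/
noncomputable def rho (L : ℕ) (x xh : Fin L → ℝ) : ℝ :=
  (L : ℝ)⁻¹ * ⨅ ℓ : Fin L, ∑ j, (x j - xh (j + ℓ)) ^ 2

/-- Base probability space for the MRA model with `n` samples:
the signal `X`, the i.i.d. uniform shifts `ℓ_i`, and the i.i.d. Gaussian noises `Z_i`. -/
noncomputable def mraBase (L n : ℕ) :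
    Measure ((Fin L → ℝ) × (Fin n → Fin L) × (Fin n → Fin L → ℝ)) :=
  (stdGaussian L).prod ((Measure.pi fun _ => unifFin L).prod (Measure.pi fun _ => stdGaussian L))

/-- The measurements `Y_i = R_{ℓ_i} X + σ Z_i`. -/
def mraY (L n : ℕ) (σ : ℝ) (ω : (Fin L → ℝ) × (Fin n → Fin L) × (Fin n → Fin L → ℝ)) :
    Fin n → Fin L → ℝ :=
  fun i j => ω.1 (j + ω.2.1 i) + σ * ω.2.2 i j

/-- `MSE*_MRA(L, σ², n)`: the infimum over measurable estimators `X̂(Y_1,…,Y_n)` of `E ρ(X, X̂)`.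
Here `σ` is the noise standard deviation. -/
noncomputable def MSEstarMRA (L n : ℕ) (σ : ℝ) : ℝ :=
  sInf { e : ℝ | ∃ f : (Fin n → Fin L → ℝ) → (Fin L → ℝ), Measurable f ∧
    e = ∫ ω, rho L ω.1 (f (mraY L n σ ω)) ∂(mraBase L n) }

/-- `n*_MRA(L, σ², ε) = min {n : MSE*_MRA(L, σ², n) ≤ ε}`. -/
noncomputable def nstarMRA (L : ℕ) (σ ε : ℝ) : ℕ :=
  sInf { n : ℕ | MSEstarMRA L n σ ≤ ε }

/-- Noise level such that `σ²(α) = L / (α log L)`. -/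
noncomputable def sigmaAlpha (L : ℕ) (α : ℝ) : ℝ :=
  Real.sqrt ((L : ℝ) / (α * Real.log L))

/-- `n*_MRA(L, α, ε) := n*_MRA(L, σ²(α), ε)`. -/
noncomputable def nstarMRAa (L : ℕ) (α ε : ℝ) : ℕ :=
  nstarMRA L (sigmaAlpha L α) ε

/-- Mutual information `I(U; V)`: the Kullback–Leibler divergence of the joint law with
respect to the product of its marginals (natural logarithm), expressed as the integral of
the log of the Radon–Nikodym derivative. -/
noncomputable def mutualInfo {α β : Type*} [MeasurableSpace α] [MeasurableSpace β]
    (μ : Measure (α × β)) : ℝ :=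
  ∫ p, Real.log ((μ.rnDeriv ((μ.map Prod.fst).prod (μ.map Prod.snd))) p).toReal ∂μ

/-- Joint law of `(X, (Y_1,…,Y_n))` in the MRA model. -/
noncomputable def mraJoint (L n : ℕ) (σ : ℝ) :
    Measure ((Fin L → ℝ) × (Fin n → Fin L → ℝ)) :=
  (mraBase L n).map fun ω => (ω.1, mraY L n σ ω)

/-- Joint law of `(X, Y)` for a single MRA measurement `Y = R_ℓ X + σ Z`. -/
noncomputable def mraJoint1 (L : ℕ) (σ : ℝ) : Measure ((Fin L → ℝ) × (Fin L → ℝ)) :=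
  ((stdGaussian L).prod ((unifFin L).prod (stdGaussian L))).map
    fun ω => (ω.1, fun j => ω.1 (j + ω.2.1) + σ * ω.2.2 j)



lemma lintegral_pi_prod {ι : Type*} [Fintype ι] (μ : ι → Measure ℝ)
    [∀ i, IsProbabilityMeasure (μ i)] (f : ι → ℝ → ℝ≥0∞) (hf : ∀ i, Measurable (f i)) :
    ∫⁻ x, ∏ i, f i (x i) ∂(Measure.pi μ) = ∏ i, ∫⁻ y, f i y ∂(μ i) := by
  have hind : iIndepFun (fun i (x : ι → ℝ) => f i (x i)) (Measure.pi μ) :=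
    iIndepFun_pi (X := fun i => f i) (fun i => (hf i).aemeasurable)
  have h := lintegral_prod_eq_prod_lintegral_of_indepFun (μ := Measure.pi μ) Finset.univ
    (fun i (x : ι → ℝ) => f i (x i)) hind (fun i => (hf i).comp (measurable_pi_apply i))
  rw [h]
  refine Finset.prod_congr rfl fun i _ => ?_
  rw [← (measurePreserving_eval μ i).lintegral_comp (hf i)]

/-- Moment generating function of `x²/2`, for a standard Gaussian `x`. -/
lemma lintegral_exp_sq {l : ℝ} (hl : |l| ≤ 1 / 2) :
    ∫⁻ x, ENNReal.ofReal (Real.exp (1 / 2 * (l * x ^ 2))) ∂(gaussianReal 0 1)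
      ≤ ENNReal.ofReal (Real.exp (1 / 2 * (l + l ^ 2))) := by
  obtain ⟨h1, h2⟩ := abs_le.mp hl
  have hpos : 0 < 1 - l := by linarith
  rw [gaussianReal_of_var_ne_zero 0 one_ne_zero,
    lintegral_withDensity_eq_lintegral_mul _ (measurable_gaussianPDF 0 1) (by fun_prop)]
  have heq : ∀ x : ℝ, (gaussianPDF 0 1 * fun x => ENNReal.ofReal (Real.exp (1 / 2 * (l * x ^ 2)))) x
      = ENNReal.ofReal ((√(2 * Real.pi))⁻¹ * Real.exp (-((1 - l) / 2) * x ^ 2)) := by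
    intro x
    simp only [Pi.mul_apply, gaussianPDF, gaussianPDFReal]
    rw [← ENNReal.ofReal_mul (by positivity), mul_assoc, ← Real.exp_add]
    simp
    ring_nf
  rw [lintegral_congr heq, ← ofReal_integral_eq_lintegral_ofReal
    ((integrable_exp_neg_mul_sq (by linarith)).const_mul _)
    (ae_of_all _ fun x => by positivity), integral_const_mul, integral_gaussian]
  apply ENNReal.ofReal_le_ofReal
  have e1 : (√(2 * Real.pi))⁻¹ * √(Real.pi / ((1 - l) / 2)) = √((1 - l)⁻¹) := by
    rw [← Real.sqrt_inv, ← Real.sqrt_mul (by positivity)]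
    congr 1
    field_simp
  rw [e1]
  have e2 : Real.exp (1 / 2 * (l + l ^ 2)) = √(Real.exp (l + l ^ 2)) := by
    rw [Real.sqrt_eq_rpow, ← Real.exp_mul]; ring_nf
  rw [e2]
  apply Real.sqrt_le_sqrt
  rw [inv_le_comm₀ hpos (Real.exp_pos _), ← Real.exp_neg]
  -- `exp (-u) ≤ 1 - l` where `u = l + l²`
  rw [Real.exp_neg, inv_le_comm₀ (Real.exp_pos _) hpos]
  have hu : -1 ≤ l + l^2 := by nlinarith
  rcases le_or_gt 0 l with hl0 | hl0
  · have := Real.quadratic_le_exp_of_nonneg (x := l + l ^ 2) (by nlinarith)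
    refine le_trans ?_ this
    rw [inv_le_iff_one_le_mul₀ hpos]
    nlinarith [mul_nonneg hl0 hl0, mul_nonneg (mul_nonneg hl0 hl0) hl0, mul_nonneg (mul_nonneg hl0 hl0) (sub_nonneg.2 h2), mul_nonneg (mul_nonneg (mul_nonneg hl0 hl0) hl0) (sub_nonneg.2 h2), mul_nonneg (mul_nonneg (mul_nonneg (mul_nonneg hl0 hl0) hl0) hl0) (sub_nonneg.2 h2)]
  · have := Real.add_one_le_exp (l + l ^ 2)
    refine le_trans ?_ this
    rw [inv_le_iff_one_le_mul₀ hpos]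
    nlinarith [pow_pos (neg_pos.2 hl0) 3]

lemma quad_eig {L : ℕ} (B : Matrix (Fin L) (Fin L) ℝ) (hB : B.IsHermitian) (x : Fin L → ℝ) :
    ∑ a, ∑ b, B a b * (∑ i, x i • hB.eigenvectorBasis i) a
      * (∑ i, x i • hB.eigenvectorBasis i) b = ∑ i, hB.eigenvalues i * x i ^ 2 := by
  set v := ∑ i, x i • hB.eigenvectorBasis i with hv
  have h1 : B.mulVec v.ofLp = (∑ i, (hB.eigenvalues i * x i) • hB.eigenvectorBasis i).ofLp := by
    rw [hv, WithLp.ofLp_sum, WithLp.ofLp_sum, Matrix.mulVec_sum]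
    refine Finset.sum_congr rfl fun i _ => ?_
    rw [WithLp.ofLp_smul, WithLp.ofLp_smul, Matrix.mulVec_smul, hB.mulVec_eigenvectorBasis,
      smul_smul, mul_comm]
  have h2 : ∑ a, ∑ b, B a b * v a * v b
      = inner ℝ (∑ i, (hB.eigenvalues i * x i) • hB.eigenvectorBasis i) v := by
    rw [PiLp.inner_apply]
    refine Finset.sum_congr rfl fun a _ => ?_
    rw [← h1]
    simp only [Matrix.mulVec, dotProduct]
    simp only [RCLike.inner_apply, conj_trivial, Finset.mul_sum]
    refine Finset.sum_congr rfl fun b _ => ?_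
    ring
  rw [h2, hv, hB.eigenvectorBasis.orthonormal.inner_sum]
  simp
  refine Finset.sum_congr rfl fun b _ => ?_
  ring

lemma sum_eig_sq {L : ℕ} (B : Matrix (Fin L) (Fin L) ℝ) (hB : B.IsHermitian) :
    ∑ i, hB.eigenvalues i ^ 2 = ∑ a, ∑ b, B a b ^ 2 := by
  have h1 : (B * B).trace = ∑ a, ∑ b, B a b ^ 2 := by
    simp only [Matrix.trace, Matrix.diag, Matrix.mul_apply]
    refine Finset.sum_congr rfl fun a _ => Finset.sum_congr rfl fun b _ => ?_
    have : B b a = B a b := by simpa using hB.apply a b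
    rw [this]; ring
  rw [← h1]
  conv_rhs => rw [hB.spectral_theorem]
  rw [← map_mul, Unitary.conjStarAlgAut_apply, Matrix.trace_mul_comm, ← mul_assoc]
  simp [Matrix.diagonal_mul_diagonal, Matrix.trace_diagonal, pow_two]

/-- Moment generating function bound for Gaussian quadratic forms. -/
lemma lintegral_exp_quad {L : ℕ} (B : Matrix (Fin L) (Fin L) ℝ) (hB : B.IsHermitian)
    (hs : ∑ a, ∑ b, B a b ^ 2 ≤ 1 / 4) :
    ∫⁻ x, ENNReal.ofReal (Real.exp (1 / 2 * ∑ a, ∑ b, B a b * x a * x b)) ∂(stdGaussian L)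
      ≤ ENNReal.ofReal (Real.exp (1 / 2 * (∑ a, B a a + ∑ a, ∑ b, B a b ^ 2))) := by
  have hmap : (stdGaussian L).map (fun x => (∑ i, x i • hB.eigenvectorBasis i).ofLp)
      = stdGaussian L := by
    have e1 := map_pi_eq_stdGaussian (ι := Fin L)
    have e2 := stdGaussian_eq_map_pi_orthonormalBasis hB.eigenvectorBasis
    have e3 := congrArg (Measure.map (WithLp.ofLp (p := 2) (V := Fin L → ℝ))) (e1.trans e2)
    rw [Measure.map_map (by fun_prop) (by fun_prop), Measure.map_map (by fun_prop) (by fun_prop)]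
      at e3
    have e4 : (WithLp.ofLp (p := 2) (V := Fin L → ℝ)) ∘ (WithLp.toLp 2) = id := rfl
    rw [e4, Measure.map_id] at e3
    exact e3.symm
  have hm : Measurable fun x : Fin L → ℝ => (∑ i, x i • hB.eigenvectorBasis i).ofLp := by
    fun_prop
  rw [← hmap, lintegral_map (by fun_prop) hm]
  simp_rw [quad_eig B hB]
  have hsum := sum_eig_sq B hB
  have hle : ∀ i, |hB.eigenvalues i| ≤ 1 / 2 := by
    intro i
    have : hB.eigenvalues i ^ 2 ≤ ∑ i, hB.eigenvalues i ^ 2 :=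
      Finset.single_le_sum (f := fun i => hB.eigenvalues i ^ 2) (fun _ _ => sq_nonneg _)
        (Finset.mem_univ i)
    apply abs_le_of_sq_le_sq _ (by norm_num)
    linarith
  have htr : ∑ a, B a a = ∑ i, hB.eigenvalues i := by
    have := hB.trace_eq_sum_eigenvalues
    simpa [Matrix.trace] using this
  rw [htr, ← hsum, ← Finset.sum_add_distrib]
  simp_rw [Finset.mul_sum, Real.exp_sum]
  rw [ENNReal.ofReal_prod_of_nonneg (fun _ _ => (Real.exp_pos _).le)]
  simp_rw [ENNReal.ofReal_prod_of_nonneg (fun _ _ => (Real.exp_pos _).le)]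
  rw [stdGaussian, lintegral_pi_prod (fun _ => gaussianReal 0 1)
    (fun i y => ENNReal.ofReal (Real.exp (1 / 2 * (hB.eigenvalues i * y ^ 2)))) (by fun_prop)]
  exact Finset.prod_le_prod' fun i _ => lintegral_exp_sq (hle i)


lemma lintegral_exp_shift {L : ℕ} [NeZero L] (t : ℝ) (l k : Fin L) (h : 16 * t ^ 2 * L ≤ 1) :
    ∫⁻ x, ENNReal.ofReal (Real.exp (t * ∑ j, x (j + l) * x (j + k))) ∂(stdGaussian L)
      ≤ ENNReal.ofReal (Real.exp ((if l = k then t * L else 0) + 2 * t ^ 2 * L)) := by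
  set P : Fin L → Fin L → ℝ := fun a b => if b = a - l + k then 1 else 0 with hP
  set B : Matrix (Fin L) (Fin L) ℝ := Matrix.of fun a b => t * (P a b + P b a) with hBdef
  have hBa : ∀ a b, B a b = t * (P a b + P b a) := fun a b => rfl
  have hB : B.IsHermitian := by
    ext a b
    simp [hBa, add_comm]
  have hPq : ∀ x : Fin L → ℝ, ∑ a, ∑ b, P a b * (x a * x b) = ∑ j, x (j + l) * x (j + k) := by
    intro x
    rw [← Equiv.sum_comp (Equiv.addRight l)]
    refine Finset.sum_congr rfl fun j _ => ?_
    simp [hP]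
  have hPs : ∑ a, ∑ b, P a b ^ 2 = L := by
    simp [hP]
  have hPs2 : ∑ a, ∑ b, P b a ^ 2 = L := by
    rw [Finset.sum_comm]; exact hPs
  have hPt : ∑ a, P a a = if l = k then (L : ℝ) else 0 := by
    have : ∀ a : Fin L, P a a = if l = k then 1 else 0 := by
      intro a
      have : a = a - l + k ↔ l = k := by
        constructor
        · intro h
          have h2 : a + l = a + k := by
            conv_lhs => rw [h]
            abel
          exact add_left_cancel h2
        · rintro rfl; simp
      simp [hP, this]
    simp_rw [this]
    split_ifs <;> simp
  have hsq : ∑ a, ∑ b, B a b ^ 2 ≤ 4 * t ^ 2 * L := by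
    calc ∑ a, ∑ b, B a b ^ 2 ≤ ∑ a, ∑ b, (2 * t ^ 2 * P a b ^ 2 + 2 * t ^ 2 * P b a ^ 2) := by
          refine Finset.sum_le_sum fun a _ => Finset.sum_le_sum fun b _ => ?_
          rw [hBa]
          nlinarith [mul_nonneg (sq_nonneg t) (sq_nonneg (P a b - P b a))]
      _ = 4 * t ^ 2 * L := by
          simp_rw [Finset.sum_add_distrib, ← Finset.mul_sum]
          rw [hPs, hPs2]; ring
  have hquad : ∀ x : Fin L → ℝ, 1 / 2 * ∑ a, ∑ b, B a b * x a * x b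
      = t * ∑ j, x (j + l) * x (j + k) := by
    intro x
    have h1 : ∑ a, ∑ b, B a b * x a * x b
        = t * ∑ a, ∑ b, P a b * (x a * x b) + t * ∑ a, ∑ b, P b a * (x b * x a) := by
      simp_rw [Finset.mul_sum, ← Finset.sum_add_distrib]
      refine Finset.sum_congr rfl fun a _ => Finset.sum_congr rfl fun b _ => ?_
      rw [hBa]; ring
    rw [h1, Finset.sum_comm (f := fun a b => P b a * (x b * x a)), hPq]
    ring
  have htr : ∑ a, B a a = 2 * (if l = k then t * L else 0) := by
    simp_rw [hBa, ← Finset.mul_sum, Finset.sum_add_distrib]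
    rw [hPt]; split_ifs <;> ring
  have := lintegral_exp_quad B hB (by linarith)
  simp_rw [hquad] at this
  refine this.trans (ENNReal.ofReal_le_ofReal (Real.exp_le_exp.2 ?_))
  rw [htr]; linarith

lemma lintegral_exp_lin {L : ℕ} (a d : Fin L → ℝ) :
    ∫⁻ z, ENNReal.ofReal (Real.exp (∑ j, (a j + d j * z j))) ∂(stdGaussian L)
      = ENNReal.ofReal (Real.exp (∑ j, (a j + d j ^ 2 / 2))) := by
  simp_rw [Real.exp_sum]
  rw [ENNReal.ofReal_prod_of_nonneg (fun _ _ => (Real.exp_pos _).le)]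
  simp_rw [ENNReal.ofReal_prod_of_nonneg (fun _ _ => (Real.exp_pos _).le)]
  rw [stdGaussian, lintegral_pi_prod (fun _ => gaussianReal 0 1)
    (fun i y => ENNReal.ofReal (Real.exp (a i + d i * y))) (by fun_prop)]
  refine Finset.prod_congr rfl fun j _ => ?_
  have hI : Integrable (fun y => Real.exp (a j + d j * y)) (gaussianReal 0 1) := by
    simp_rw [Real.exp_add]
    exact (integrable_exp_mul_gaussianReal (d j)).const_mul _
  rw [← ofReal_integral_eq_lintegral_ofReal hI (ae_of_all _ fun x => by positivity)]
  congr 1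
  simp_rw [Real.exp_add]
  rw [integral_const_mul]
  have := congrFun (mgf_fun_id_gaussianReal (μ := 0) (v := 1)) (d j)
  simp only [mgf] at this
  rw [this]; simp

/-- Log-density of `N(m, v)` with respect to `N(0, w)`. -/
noncomputable def lr (s m y : ℝ) : ℝ :=
  1 / 2 * Real.log ((1 + s ^ 2) / s ^ 2) - y ^ 2 / (2 * (s ^ 2 * (1 + s ^ 2)))
    + (y * m / s ^ 2 - m ^ 2 / (2 * s ^ 2))

lemma gaussian_lr {s : ℝ} (hs : 0 < s) (m : ℝ) :
    gaussianReal m (NNReal.mk (s ^ 2) (sq_nonneg s)) =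
      (gaussianReal 0 (1 + NNReal.mk (s ^ 2) (sq_nonneg s))).withDensity
        fun y => ENNReal.ofReal (Real.exp (lr s m y)) := by
  have hv : NNReal.mk (s ^ 2) (sq_nonneg s) ≠ 0 := by
    intro h
    have := congrArg NNReal.toReal h
    simp at this
    exact hs.ne' this
  have hw : (1 + NNReal.mk (s ^ 2) (sq_nonneg s) : NNReal) ≠ 0 := by
    positivity
  have hml : Measurable fun y => ENNReal.ofReal (Real.exp (lr s m y)) := by
    unfold lr; fun_prop
  rw [gaussianReal_of_var_ne_zero m hv, gaussianReal_of_var_ne_zero 0 hw,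
    ← withDensity_mul _ (measurable_gaussianPDF _ _) hml]
  congr 1
  ext y
  simp only [Pi.mul_apply, gaussianPDF, gaussianPDFReal]
  rw [← ENNReal.ofReal_mul (by positivity)]
  congr 1
  have hs2 : (0:ℝ) < s ^ 2 := by positivity
  have e1 : Real.exp (lr s m y) = √((1 + s ^ 2) / s ^ 2) * Real.exp (- y ^ 2 / (2 * (s ^ 2 * (1 + s ^ 2)))
    + (y * m / s ^ 2 - m ^ 2 / (2 * s ^ 2))) := by
    rw [Real.sqrt_eq_rpow, Real.rpow_def_of_pos (by positivity), ← Real.exp_add, lr]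
    congr 1; ring
  rw [e1]
  simp only [NNReal.coe_add, NNReal.coe_one, NNReal.coe_mk, sub_zero]
  have e2 : (√(2 * Real.pi * s ^ 2))⁻¹
      = (√(2 * Real.pi * (1 + s ^ 2)))⁻¹ * √((1 + s ^ 2) / s ^ 2) := by
    rw [← Real.sqrt_inv, ← Real.sqrt_inv, ← Real.sqrt_mul (by positivity)]
    congr 1; field_simp
  have e3 : Real.exp (-(y - m) ^ 2 / (2 * s ^ 2)) = Real.exp (-y ^ 2 / (2 * (1 + s ^ 2)))
      * Real.exp (-y ^ 2 / (2 * (s ^ 2 * (1 + s ^ 2))) + (y * m / s ^ 2 - m ^ 2 / (2 * s ^ 2))) := by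
    rw [← Real.exp_add]
    congr 1
    field_simp
    ring
  rw [e2, e3]
  ring

lemma pi_withDensity {L : ℕ} (μ : Measure ℝ) [IsProbabilityMeasure μ] (f : Fin L → ℝ → ℝ≥0∞)
    (hf : ∀ i, Measurable (f i)) [∀ i, IsProbabilityMeasure (μ.withDensity (f i))] :
    Measure.pi (fun i => μ.withDensity (f i))
      = (Measure.pi fun _ : Fin L => μ).withDensity fun x => ∏ i, f i (x i) := by
  apply Measure.pi_eq
  intro S hS
  rw [withDensity_apply _ (MeasurableSet.univ_pi hS), ← lintegral_indicator (MeasurableSet.univ_pi hS)]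
  have : ∀ x : Fin L → ℝ, (Set.univ.pi S).indicator (fun x => ∏ i, f i (x i)) x
      = ∏ i, (S i).indicator (f i) (x i) := by
    intro x
    by_cases hx : x ∈ Set.univ.pi S
    · rw [Set.indicator_of_mem hx]
      refine Finset.prod_congr rfl fun i _ => ?_
      rw [Set.indicator_of_mem (hx i (Set.mem_univ i))]
    · rw [Set.indicator_of_notMem hx]
      simp only [Set.mem_pi, Set.mem_univ, true_implies, not_forall] at hx
      obtain ⟨i, hi⟩ := hx
      symm
      exact Finset.prod_eq_zero (Finset.mem_univ i) (Set.indicator_of_notMem hi _)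
  rw [lintegral_congr this, lintegral_pi_prod (fun _ => μ) (fun i => (S i).indicator (f i))
    (fun i => (hf i).indicator (hS i))]
  refine Finset.prod_congr rfl fun i _ => ?_
  rw [lintegral_indicator (hS i), withDensity_apply _ (hS i)]

/-- The law of `Y`. -/
noncomputable def lawY (L : ℕ) (s : ℝ) : Measure (Fin L → ℝ) :=
  Measure.pi fun _ => gaussianReal 0 (1 + NNReal.mk (s ^ 2) (sq_nonneg s))

instance (L : ℕ) : IsProbabilityMeasure (stdGaussian L) := by
  unfold stdGaussian; infer_instance

instance (L : ℕ) (s : ℝ) : IsProbabilityMeasure (lawY L s) := by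
  unfold lawY; infer_instance

instance (L : ℕ) [NeZero L] : IsProbabilityMeasure (unifFin L) := by
  constructor
  simp [unifFin]
  exact ENNReal.inv_mul_cancel (by simpa using NeZero.ne L) (by simp)

lemma law_cond {L : ℕ} {s : ℝ} (hs : 0 < s) (m : Fin L → ℝ) :
    (stdGaussian L).map (fun z j => m j + s * z j)
      = (lawY L s).withDensity fun y => ENNReal.ofReal (Real.exp (∑ j, lr s (m j) (y j))) := by
  have hp : ∀ j : Fin L, IsProbabilityMeasure ((gaussianReal 0 (1 + NNReal.mk (s ^ 2) (sq_nonneg s))).withDensity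
        fun y => ENNReal.ofReal (Real.exp (lr s (m j) y))) := by
    intro j; rw [← gaussian_lr hs]; infer_instance
  simp_rw [Real.exp_sum, ENNReal.ofReal_prod_of_nonneg (fun _ _ => (Real.exp_pos _).le)]
  rw [lawY, ← pi_withDensity _ (fun j y => ENNReal.ofReal (Real.exp (lr s (m j) y)))
    (by unfold lr; fun_prop)]
  simp_rw [← gaussian_lr hs]
  rw [stdGaussian, Measure.pi_map_pi (f := fun j z => m j + s * z) (by fun_prop)]
  congr 1
  ext1 j
  have : (fun z : ℝ => m j + s * z) = (fun z => m j + z) ∘ fun z => s * z := rfl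
  rw [this, ← Measure.map_map (by fun_prop) (by fun_prop), gaussianReal_map_const_mul,
    gaussianReal_map_const_add]
  simp

lemma stdGaussian_shift {L : ℕ} [NeZero L] (l : Fin L) :
    (stdGaussian L).map (fun x j => x (j + l)) = stdGaussian L := by
  have := (measurePreserving_piCongrLeft (fun _ : Fin L => gaussianReal 0 1)
    (Equiv.addRight l).symm).map_eq
  rw [stdGaussian]
  convert this using 2
  ext x j
  have := Equiv.piCongrLeft_apply_apply (fun _ : Fin L => ℝ) (Equiv.addRight l).symm x (j + l)
  simp at this
  simp [MeasurableEquiv.piCongrLeft, this]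

lemma law_snd {L : ℕ} [NeZero L] (s : ℝ) (l : Fin L) :
    ((stdGaussian L).prod (stdGaussian L)).map (fun p j => p.1 (j + l) + s * p.2 j)
      = lawY L s := by
  have h1 : ((stdGaussian L).prod (stdGaussian L)).map
      (Prod.map (fun x j => x (j + l)) id) = (stdGaussian L).prod (stdGaussian L) := by
    rw [← Measure.map_prod_map _ _ (by fun_prop) (by fun_prop), stdGaussian_shift, Measure.map_id]
  have h2 : (fun (p : (Fin L → ℝ) × (Fin L → ℝ)) j => p.1 (j + l) + s * p.2 j)
      = (fun (p : (Fin L → ℝ) × (Fin L → ℝ)) j => p.1 j + s * p.2 j) ∘ (Prod.map (fun x j => x (j + l)) id) := rfl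
  rw [h2, ← Measure.map_map (by fun_prop) (by fun_prop), h1]
  have h3 := (measurePreserving_arrowProdEquivProdArrow ℝ ℝ (Fin L) (fun _ => gaussianReal 0 1)
    (fun _ => gaussianReal 0 1)).map_eq
  unfold stdGaussian
  rw [← h3, Measure.map_map (by fun_prop) (by fun_prop)]
  have h4 : ((fun (p : (Fin L → ℝ) × (Fin L → ℝ)) j => p.1 j + s * p.2 j)
      ∘ (MeasurableEquiv.arrowProdEquivProdArrow ℝ ℝ (Fin L)))
      = fun (q : Fin L → ℝ × ℝ) j => (fun p : ℝ × ℝ => p.1 + s * p.2) (q j) := rfl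
  rw [h4, Measure.pi_map_pi (f := fun _ (p : ℝ × ℝ) => p.1 + s * p.2) (by fun_prop), lawY]
  congr 1
  ext1 j
  have h5 : (fun p : ℝ × ℝ => p.1 + s * p.2) = (fun p => p.1 + p.2) ∘ (Prod.map id fun z => s * z) := rfl
  rw [h5, ← Measure.map_map (by fun_prop) (by fun_prop), ← Measure.map_prod_map _ _ (by fun_prop) (by fun_prop),
    Measure.map_id, gaussianReal_map_const_mul]
  change (gaussianReal 0 1 ∗ gaussianReal _ _) = _
  rw [gaussianReal_conv_gaussianReal]
  simp


/-- The base measure of the single-measurement model. -/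
noncomputable def base1 (L : ℕ) : Measure ((Fin L → ℝ) × Fin L × (Fin L → ℝ)) :=
  (stdGaussian L).prod ((unifFin L).prod (stdGaussian L))

/-- The measurement. -/
def Y1 (L : ℕ) (s : ℝ) (ω : (Fin L → ℝ) × Fin L × (Fin L → ℝ)) : Fin L → ℝ :=
  fun j => ω.1 (j + ω.2.1) + s * ω.2.2 j

instance (L : ℕ) [NeZero L] : IsProbabilityMeasure (base1 L) := by
  unfold base1; infer_instance

lemma measurable_Y1 (L : ℕ) (s : ℝ) : Measurable (Y1 L s) := by
  rw [measurable_pi_iff]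
  intro j
  have : (fun ω => Y1 L s ω j) = fun ω : (Fin L → ℝ) × Fin L × (Fin L → ℝ) =>
      (∑ k, if j + ω.2.1 = k then ω.1 k else 0) + s * ω.2.2 j := by
    ext ω; simp [Y1]
  rw [this]
  have hj : ∀ k, MeasurableSet {ω : (Fin L → ℝ) × Fin L × (Fin L → ℝ) | j + ω.2.1 = k} := by
    intro k
    have : Measurable fun ω : (Fin L → ℝ) × Fin L × (Fin L → ℝ) => j + ω.2.1 :=
      (measurable_of_finite (fun l : Fin L => j + l)).comp (measurable_fst.comp measurable_snd)
    exact this (measurableSet_singleton k)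
  refine Measurable.add (Finset.measurable_sum _ fun k _ => Measurable.ite (hj k) ?_ ?_) ?_ <;>
    fun_prop

lemma joint_eq (L : ℕ) (s : ℝ) : mraJoint1 L s = (base1 L).map fun ω => (ω.1, Y1 L s ω) := rfl

lemma measurable_XY (L : ℕ) (s : ℝ) : Measurable fun ω => (ω.1, Y1 L s ω) :=
  measurable_fst.prodMk (measurable_Y1 L s)

lemma lintegral_base {L : ℕ} [NeZero L] {F : (Fin L → ℝ) × Fin L × (Fin L → ℝ) → ℝ≥0∞}
    (hF : Measurable F) :
    ∫⁻ ω, F ω ∂(base1 L)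
      = ∑ l, (L : ℝ≥0∞)⁻¹ * ∫⁻ x, ∫⁻ z, F (x, l, z) ∂(stdGaussian L) ∂(stdGaussian L) := by
  rw [base1, lintegral_prod _ hF.aemeasurable]
  have h1 : ∀ x, ∫⁻ p, F (x, p) ∂((unifFin L).prod (stdGaussian L))
      = ∑ l, (L : ℝ≥0∞)⁻¹ * ∫⁻ z, F (x, l, z) ∂(stdGaussian L) := by
    intro x
    rw [lintegral_prod _ (by fun_prop), unifFin, lintegral_smul_measure, lintegral_count,
      tsum_fintype, smul_eq_mul, Finset.mul_sum]
  simp_rw [h1]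
  have hm : ∀ l : Fin L, Measurable fun x => ∫⁻ z, F (x, l, z) ∂(stdGaussian L) := by
    intro l
    apply Measurable.lintegral_prod_right' (f := fun p : (Fin L → ℝ) × (Fin L → ℝ) => F (p.1, l, p.2))
    fun_prop
  rw [lintegral_finsetSum _ (fun l _ => (hm l).const_mul _)]
  refine Finset.sum_congr rfl fun l _ => ?_
  rw [lintegral_const_mul _ (hm l)]

lemma sum_inv_mul {L : ℕ} [NeZero L] (m : ℝ≥0∞) : ∑ _l : Fin L, (L : ℝ≥0∞)⁻¹ * m = m := by
  simp only [Finset.sum_const, Finset.card_univ, Fintype.card_fin, nsmul_eq_mul]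
  rw [← mul_assoc, ENNReal.mul_inv_cancel (by simpa using NeZero.ne L) (by simp), one_mul]

lemma lintegral_base_le {L : ℕ} [NeZero L] {F : (Fin L → ℝ) × Fin L × (Fin L → ℝ) → ℝ≥0∞}
    (hF : Measurable F) {m : ℝ≥0∞}
    (h : ∀ l, ∫⁻ x, ∫⁻ z, F (x, l, z) ∂(stdGaussian L) ∂(stdGaussian L) ≤ m) :
    ∫⁻ ω, F ω ∂(base1 L) ≤ m := by
  rw [lintegral_base hF, ← sum_inv_mul (L := L) m]
  gcongr with l
  exact h l

lemma map_snd_joint {L : ℕ} [NeZero L] (s : ℝ) : (base1 L).map (Y1 L s) = lawY L s := by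
  ext A hA
  rw [← lintegral_indicator_one hA, ← lintegral_indicator_one hA,
    lintegral_map (measurable_one.indicator hA) (measurable_Y1 L s),
    lintegral_base (F := fun ω => A.indicator 1 (Y1 L s ω))
      ((measurable_one.indicator hA).comp (measurable_Y1 L s))]
  rw [← sum_inv_mul (L := L) (∫⁻ a, A.indicator 1 a ∂(lawY L s))]
  refine Finset.sum_congr rfl fun l _ => ?_
  congr 1
  rw [← law_snd s l, lintegral_map (measurable_one.indicator hA) (by fun_prop),
    lintegral_prod (fun p : (Fin L → ℝ) × (Fin L → ℝ) =>
      A.indicator (1 : (Fin L → ℝ) → ℝ≥0∞) (fun j => p.1 (j + l) + s * p.2 j))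
      (((measurable_one.indicator hA).comp (by fun_prop)).aemeasurable)]
  rfl

/-- Log likelihood ratio for shift `k`. -/
noncomputable def ll (L : ℕ) (s : ℝ) (k : Fin L) (p : (Fin L → ℝ) × (Fin L → ℝ)) : ℝ :=
  ∑ j, lr s (p.1 (j + k)) (p.2 j)

/-- The density of the joint law with respect to the product of marginals. -/
noncomputable def dens (L : ℕ) (s : ℝ) (p : (Fin L → ℝ) × (Fin L → ℝ)) : ℝ :=
  ∑ k, (L : ℝ)⁻¹ * Real.exp (ll L s k p)

lemma measurable_ll (L : ℕ) (s : ℝ) (k : Fin L) : Measurable (ll L s k) := by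
  unfold ll lr; fun_prop

lemma measurable_dens (L : ℕ) (s : ℝ) : Measurable (dens L s) := by
  have := measurable_ll L s
  unfold dens; fun_prop

lemma dens_pos {L : ℕ} [NeZero L] (s : ℝ) (p) : 0 < dens L s p := by
  have : (0:ℝ) < L := by exact_mod_cast Nat.pos_of_ne_zero (NeZero.ne L)
  exact Finset.sum_pos (fun k _ => by positivity) Finset.univ_nonempty

lemma joint_withDensity {L : ℕ} [NeZero L] {s : ℝ} (hs : 0 < s) :
    mraJoint1 L s = ((stdGaussian L).prod (lawY L s)).withDensity
      fun p => ENNReal.ofReal (dens L s p) := by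
  have hL : (0:ℝ) < L := by exact_mod_cast Nat.pos_of_ne_zero (NeZero.ne L)
  have hLi : ENNReal.ofReal (L : ℝ)⁻¹ = (L : ℝ≥0∞)⁻¹ := by
    rw [ENNReal.ofReal_inv_of_pos hL]; simp
  ext A hA
  have hind : Measurable (A.indicator (1 : (Fin L → ℝ) × (Fin L → ℝ) → ℝ≥0∞)) := measurable_one.indicator hA
  have hml := measurable_ll L s
  have hmd := measurable_dens L s
  rw [joint_eq, ← lintegral_indicator_one hA, ← lintegral_indicator_one hA,
    lintegral_map hind (measurable_XY L s),
    lintegral_base (F := fun ω => A.indicator 1 (ω.1, Y1 L s ω)) (hind.comp (measurable_XY L s)),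
    lintegral_withDensity_eq_lintegral_mul _ (by fun_prop) hind]
  have h1 : ∀ p, ((fun p => ENNReal.ofReal (dens L s p)) *
      A.indicator (1 : (Fin L → ℝ) × (Fin L → ℝ) → ℝ≥0∞)) p
      = ∑ k, (L : ℝ≥0∞)⁻¹ * (ENNReal.ofReal (Real.exp (ll L s k p)) * A.indicator 1 p) := by
    intro p
    simp only [Pi.mul_apply, dens]
    rw [ENNReal.ofReal_sum_of_nonneg (fun k _ => by positivity), Finset.sum_mul]
    refine Finset.sum_congr rfl fun k _ => ?_
    rw [ENNReal.ofReal_mul (by positivity), hLi, mul_assoc]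
  rw [lintegral_congr h1, lintegral_finsetSum _ (fun k _ => by fun_prop)]
  refine Finset.sum_congr rfl fun l _ => ?_
  rw [lintegral_const_mul _ (by fun_prop)]
  congr 1
  rw [lintegral_prod _ (by fun_prop)]
  refine lintegral_congr fun x => ?_
  have h2 := law_cond hs (fun j => x (j + l))
  have hind2 : Measurable fun y => A.indicator (1 : (Fin L → ℝ) × (Fin L → ℝ) → ℝ≥0∞) (x, y) := by fun_prop
  have h3 := congrArg (fun μ => ∫⁻ y, A.indicator (1 : (Fin L → ℝ) × (Fin L → ℝ) → ℝ≥0∞) (x, y) ∂μ) h2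
  rw [lintegral_map hind2 (by fun_prop), lintegral_withDensity_eq_lintegral_mul _
    (by unfold lr; fun_prop) hind2] at h3
  exact h3

lemma joint_marg {L : ℕ} [NeZero L] (s : ℝ) :
    ((mraJoint1 L s).map Prod.fst).prod ((mraJoint1 L s).map Prod.snd)
      = (stdGaussian L).prod (lawY L s) := by
  rw [joint_eq, Measure.map_map (by fun_prop) (measurable_XY L s),
    Measure.map_map (by fun_prop) (measurable_XY L s)]
  have h1 : (base1 L).map (Prod.snd ∘ fun ω => (ω.1, Y1 L s ω)) = lawY L s := map_snd_joint s
  have h2 : (base1 L).map (Prod.fst ∘ fun ω => (ω.1, Y1 L s ω)) = stdGaussian L := by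
    change (base1 L).map Prod.fst = _
    rw [base1, Measure.map_fst_prod]; simp
  rw [h1, h2]

instance (L : ℕ) [NeZero L] (s : ℝ) : IsProbabilityMeasure (mraJoint1 L s) :=
  Measure.isProbabilityMeasure_map (measurable_XY L s).aemeasurable

lemma mutualInfo_nonneg {L : ℕ} [NeZero L] {s : ℝ} (hs : 0 < s) :
    0 ≤ mutualInfo (mraJoint1 L s) := by
  have hac : mraJoint1 L s ≪ (stdGaussian L).prod (lawY L s) := by
    rw [joint_withDensity hs]; exact withDensity_absolutelyContinuous _ _
  have := InformationTheory.toReal_klDiv_of_measure_eq hac (by simp)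
  rw [mutualInfo, joint_marg]
  change 0 ≤ ∫ p, llr (mraJoint1 L s) ((stdGaussian L).prod (lawY L s)) p ∂_
  rw [← this]
  positivity

lemma mutualInfo_eq {L : ℕ} [NeZero L] {s : ℝ} (hs : 0 < s) :
    mutualInfo (mraJoint1 L s) = ∫ ω, Real.log (dens L s (ω.1, Y1 L s ω)) ∂(base1 L) := by
  have hmd := measurable_dens L s
  have hac : mraJoint1 L s ≪ (stdGaussian L).prod (lawY L s) := by
    rw [joint_withDensity hs]; exact withDensity_absolutelyContinuous _ _
  rw [mutualInfo, joint_marg]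
  have h1 : (mraJoint1 L s).rnDeriv ((stdGaussian L).prod (lawY L s))
      =ᵐ[(stdGaussian L).prod (lawY L s)] fun p => ENNReal.ofReal (dens L s p) := by
    conv_lhs => rw [joint_withDensity hs]
    exact Measure.rnDeriv_withDensity _ (by fun_prop)
  have h2 := hac.ae_le h1
  have h3 : ∫ p, Real.log ((mraJoint1 L s).rnDeriv ((stdGaussian L).prod (lawY L s)) p).toReal
      ∂(mraJoint1 L s) = ∫ p, Real.log (dens L s p) ∂(mraJoint1 L s) := by
    refine integral_congr_ae ?_
    filter_upwards [h2] with p hp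
    rw [hp, ENNReal.toReal_ofReal (dens_pos s p).le]
  rw [h3, joint_eq, integral_map (measurable_XY L s).aemeasurable
    (hmd.log.aestronglyMeasurable)]


/-- The part of the log likelihood depending on the shift. -/
noncomputable def bb (L : ℕ) (s : ℝ) (k : Fin L) (p : (Fin L → ℝ) × (Fin L → ℝ)) : ℝ :=
  ∑ j, (p.2 j * p.1 (j + k) / s ^ 2 - p.1 (j + k) ^ 2 / (2 * s ^ 2))

/-- The part of the log likelihood not depending on the shift. -/
noncomputable def aa (L : ℕ) (s : ℝ) (y : Fin L → ℝ) : ℝ :=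
  ∑ j, (1 / 2 * Real.log ((1 + s ^ 2) / s ^ 2) - y j ^ 2 / (2 * (s ^ 2 * (1 + s ^ 2))))

lemma ll_eq (L : ℕ) (s : ℝ) (k : Fin L) (p) : ll L s k p = aa L s p.2 + bb L s k p := by
  simp only [ll, aa, bb, lr, ← Finset.sum_add_distrib]

lemma measurable_bb (L : ℕ) (s : ℝ) (k : Fin L) : Measurable (bb L s k) := by
  unfold bb; fun_prop

lemma integrable_of_lintegral_le {Ω : Type*} [MeasurableSpace Ω] {μ : Measure Ω} {f : Ω → ℝ}
    (hf : Measurable f) (h0 : ∀ ω, 0 ≤ f ω) {m : ℝ} (hm : 0 ≤ m)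
    (h : ∫⁻ ω, ENNReal.ofReal (f ω) ∂μ ≤ ENNReal.ofReal m) :
    Integrable f μ ∧ ∫ ω, f ω ∂μ ≤ m := by
  constructor
  · refine ⟨hf.aestronglyMeasurable, ?_⟩
    rw [hasFiniteIntegral_iff_ofReal (ae_of_all _ h0)]
    exact h.trans_lt ENNReal.ofReal_lt_top
  · rw [integral_eq_lintegral_of_nonneg_ae (ae_of_all _ h0) hf.aestronglyMeasurable]
    exact ENNReal.toReal_le_of_le_ofReal hm h

lemma lintegral_bb {L : ℕ} {s : ℝ} (hs : 0 < s) (θ : ℝ) (l k : Fin L) (x : Fin L → ℝ) :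
    ∫⁻ z, ENNReal.ofReal (Real.exp (θ * bb L s k (x, Y1 L s (x, l, z)))) ∂(stdGaussian L)
      = ENNReal.ofReal (Real.exp (∑ j, (θ * (x (j + l) * x (j + k) / s ^ 2
        - x (j + k) ^ 2 / (2 * s ^ 2)) + (θ * x (j + k) / s) ^ 2 / 2))) := by
  rw [← lintegral_exp_lin]
  refine lintegral_congr fun z => ?_
  congr 2
  rw [bb, Finset.mul_sum]
  refine Finset.sum_congr rfl fun j _ => ?_
  simp only [Y1]
  field_simp
  ring

lemma exp_eighth : Real.exp (1 / 8) ≤ 2 := by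
  rw [← Real.le_log_iff_exp_le (by norm_num)]
  have := Real.log_two_gt_d9
  linarith

lemma lintegral_off {L : ℕ} [NeZero L] {s : ℝ} (hs : 0 < s) (hL : 16 * (L : ℝ) ≤ s ^ 4)
    {l k : Fin L} (hlk : l ≠ k) :
    ∫⁻ x, ∫⁻ z, ENNReal.ofReal (Real.exp (bb L s k (x, Y1 L s (x, l, z))))
      ∂(stdGaussian L) ∂(stdGaussian L) ≤ ENNReal.ofReal 2 := by
  have h1 : ∀ x, ∫⁻ z, ENNReal.ofReal (Real.exp (bb L s k (x, Y1 L s (x, l, z)))) ∂(stdGaussian L)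
      = ENNReal.ofReal (Real.exp ((s ^ 2)⁻¹ * ∑ j, x (j + l) * x (j + k))) := by
    intro x
    have := lintegral_bb hs 1 l k x
    simp only [one_mul] at this
    rw [this]
    congr 2
    rw [Finset.mul_sum]
    refine Finset.sum_congr rfl fun j _ => ?_
    field_simp
    ring
  simp_rw [h1]
  have h2 : 16 * ((s ^ 2)⁻¹) ^ 2 * L ≤ 1 := by
    have : 16 * ((s ^ 2)⁻¹) ^ 2 * L = (16 * L) / s ^ 4 := by field_simp
    rw [this, div_le_one (by positivity)]; exact hL
  refine (lintegral_exp_shift _ l k h2).trans (ENNReal.ofReal_le_ofReal ?_)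
  rw [if_neg hlk]
  refine le_trans (Real.exp_le_exp.2 ?_) exp_eighth
  linarith

lemma lintegral_diag {L : ℕ} [NeZero L] {s θ : ℝ} (hs : 0 < s) (hL : 16 * (L : ℝ) ≤ s ^ 4)
    (hlog : (L : ℝ) / s ^ 2 ≤ 2 * Real.log L) (h0 : 0 < θ) (h1 : θ ≤ 1) (l : Fin L) :
    ∫⁻ x, ∫⁻ z, ENNReal.ofReal (Real.exp (θ * bb L s l (x, Y1 L s (x, l, z))))
      ∂(stdGaussian L) ∂(stdGaussian L)
      ≤ ENNReal.ofReal (2 * Real.exp ((θ + θ ^ 2) * Real.log L)) := by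
  set t : ℝ := (θ + θ ^ 2) / (2 * s ^ 2) with ht
  have h1' : ∀ x, ∫⁻ z, ENNReal.ofReal (Real.exp (θ * bb L s l (x, Y1 L s (x, l, z))))
      ∂(stdGaussian L)
      = ENNReal.ofReal (Real.exp (t * ∑ j, x (j + l) * x (j + l))) := by
    intro x
    rw [lintegral_bb hs θ l l x]
    congr 2
    rw [Finset.mul_sum]
    refine Finset.sum_congr rfl fun j _ => ?_
    rw [ht]
    field_simp
    ring
  simp_rw [h1']
  have ht0 : 0 ≤ t := by positivity
  have ht1 : t ≤ (s ^ 2)⁻¹ := by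
    rw [ht, div_le_iff₀ (by positivity)]
    have : (s ^ 2)⁻¹ * (2 * s ^ 2) = 2 := by field_simp
    rw [this]; nlinarith
  have h2' : 16 * ((s ^ 2)⁻¹) ^ 2 * L ≤ 1 := by
    have : 16 * ((s ^ 2)⁻¹) ^ 2 * L = (16 * L) / s ^ 4 := by field_simp
    rw [this, div_le_one (by positivity)]; exact hL
  have h2 : 16 * t ^ 2 * L ≤ 1 := by
    refine le_trans ?_ h2'
    gcongr
  refine (lintegral_exp_shift _ l l h2).trans (ENNReal.ofReal_le_ofReal ?_)
  rw [if_pos rfl, add_comm, Real.exp_add]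
  refine mul_le_mul ?_ (Real.exp_le_exp.2 ?_) (Real.exp_pos _).le (by norm_num)
  · refine le_trans (Real.exp_le_exp.2 ?_) exp_eighth
    linarith
  · have : t * L = (θ + θ ^ 2) / 2 * (L / s ^ 2) := by rw [ht]; field_simp
    rw [this]
    have h3 : (θ + θ ^ 2) / 2 * (L / s ^ 2) ≤ (θ + θ ^ 2) / 2 * (2 * Real.log L) := by gcongr
    linarith

lemma integrable_aa {L : ℕ} [NeZero L] {s : ℝ} (hs : 0 < s) :
    Integrable (fun ω => aa L s (Y1 L s ω)) (base1 L) ∧ ∫ ω, aa L s (Y1 L s ω) ∂(base1 L) ≤ 0 := by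
  set w := 1 + NNReal.mk (s ^ 2) (sq_nonneg s) with hw
  have hmp : ∀ j : Fin L, MeasurePreserving (Function.eval j) (lawY L s) (gaussianReal 0 w) :=
    fun j => measurePreserving_eval _ j
  have hi0 : Integrable (fun y : ℝ => y ^ 2) (gaussianReal 0 w) :=
    (memLp_id_gaussianReal (μ := 0) (v := w) 2).integrable_sq
  have hi : ∀ j : Fin L, Integrable (fun y : Fin L → ℝ => y j ^ 2) (lawY L s) := fun j =>
    (hmp j).integrable_comp_of_integrable hi0
  have hv0 : ∫ y, y ^ 2 ∂(gaussianReal 0 w) = 1 + s ^ 2 := by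
    have h1 := variance_fun_id_gaussianReal (μ := 0) (v := w)
    rw [variance_of_integral_eq_zero (by fun_prop) (by simp)] at h1
    rw [h1, hw]; simp
  have hv : ∀ j : Fin L, ∫ y, y j ^ 2 ∂(lawY L s) = 1 + s ^ 2 := by
    intro j
    rw [← hv0, ← (hmp j).map_eq, integral_map (hmp j).measurable.aemeasurable (by fun_prop)]
  have hia : ∀ j : Fin L, Integrable (fun y : Fin L → ℝ => 1 / 2 * Real.log ((1 + s ^ 2) / s ^ 2)
      - y j ^ 2 / (2 * (s ^ 2 * (1 + s ^ 2)))) (lawY L s) :=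
    fun j => (integrable_const _).sub ((hi j).div_const _)
  have hI : Integrable (aa L s) (lawY L s) := integrable_finsetSum _ fun j _ => hia j
  have hle : ∫ y, aa L s y ∂(lawY L s) ≤ 0 := by
    unfold aa
    rw [integral_finsetSum _ fun j _ => hia j]
    refine Finset.sum_nonpos fun j _ => ?_
    rw [integral_sub (integrable_const _) ((hi j).div_const _), integral_div, hv]
    simp only [integral_const, probReal_univ, one_smul]
    have h2 : Real.log ((1 + s ^ 2) / s ^ 2) ≤ (1 + s ^ 2) / s ^ 2 - 1 :=
      Real.log_le_sub_one_of_pos (by positivity)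
    have h3 : (1 + s ^ 2) / s ^ 2 - 1 = 2 * ((1 + s ^ 2) / (2 * (s ^ 2 * (1 + s ^ 2)))) := by
      field_simp; ring
    linarith
  rw [← map_snd_joint s] at hI hle
  refine ⟨hI.comp_measurable (measurable_Y1 L s), ?_⟩
  rwa [integral_map (measurable_Y1 L s).aemeasurable hI.aestronglyMeasurable] at hle

lemma log_le_lin {u c : ℝ} (hu : 0 < u) (hc : 0 < c) : Real.log u ≤ Real.log c + (u / c - 1) := by
  have := Real.log_le_sub_one_of_pos (div_pos hu hc)
  rw [Real.log_div hu.ne' hc.ne'] at this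
  linarith

/-- `exp (θ b)` of the true shift. -/
noncomputable def T0 (L : ℕ) (s θ : ℝ) (ω : (Fin L → ℝ) × Fin L × (Fin L → ℝ)) : ℝ :=
  ∑ k, if ω.2.1 = k then Real.exp (θ * bb L s k (ω.1, Y1 L s ω)) else 0

/-- Contribution of the wrong shifts. -/
noncomputable def S0 (L : ℕ) (s : ℝ) (ω : (Fin L → ℝ) × Fin L × (Fin L → ℝ)) : ℝ :=
  ∑ k, if ω.2.1 = k then 0 else (L : ℝ)⁻¹ * Real.exp (bb L s k (ω.1, Y1 L s ω))

lemma measurableSet_l {L : ℕ} (k : Fin L) :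
    MeasurableSet {ω : (Fin L → ℝ) × Fin L × (Fin L → ℝ) | ω.2.1 = k} :=
  (measurable_fst.comp measurable_snd) (measurableSet_singleton k)

lemma measurable_T0 (L : ℕ) (s θ : ℝ) : Measurable (T0 L s θ) := by
  refine Finset.measurable_sum _ fun k _ => Measurable.ite (measurableSet_l k) ?_ measurable_const
  have := (measurable_bb L s k).comp (measurable_XY L s)
  exact (this.const_mul θ).exp

lemma measurable_S0 (L : ℕ) (s : ℝ) : Measurable (S0 L s) := by
  refine Finset.measurable_sum _ fun k _ => Measurable.ite (measurableSet_l k) measurable_const ?_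
  have := (measurable_bb L s k).comp (measurable_XY L s)
  exact this.exp.const_mul _

lemma T0_bound {L : ℕ} [NeZero L] {s θ : ℝ} (hs : 0 < s) (hL : 16 * (L : ℝ) ≤ s ^ 4)
    (hlog : (L : ℝ) / s ^ 2 ≤ 2 * Real.log L) (h0 : 0 < θ) (h1 : θ ≤ 1) :
    Integrable (T0 L s θ) (base1 L) ∧
      ∫ ω, T0 L s θ ω ∂(base1 L) ≤ 2 * Real.exp ((θ + θ ^ 2) * Real.log L) := by
  refine integrable_of_lintegral_le (measurable_T0 L s θ) (fun ω => ?_) (by positivity) ?_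
  · exact Finset.sum_nonneg fun k _ => by split_ifs <;> positivity
  · refine lintegral_base_le (measurable_T0 L s θ).ennreal_ofReal fun l => ?_
    simp only [T0, Finset.sum_ite_eq, Finset.mem_univ, if_true]
    exact lintegral_diag hs hL hlog h0 h1 l

lemma S0_bound {L : ℕ} [NeZero L] {s : ℝ} (hs : 0 < s) (hL : 16 * (L : ℝ) ≤ s ^ 4) :
    Integrable (S0 L s) (base1 L) ∧ ∫ ω, S0 L s ω ∂(base1 L) ≤ 2 := by
  have hLp : (0:ℝ) < L := by exact_mod_cast Nat.pos_of_ne_zero (NeZero.ne L)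
  have hLi : ENNReal.ofReal (L : ℝ)⁻¹ = (L : ℝ≥0∞)⁻¹ := by
    rw [ENNReal.ofReal_inv_of_pos hLp]; simp
  refine integrable_of_lintegral_le (measurable_S0 L s) (fun ω => ?_) (by positivity) ?_
  · exact Finset.sum_nonneg fun k _ => by split_ifs <;> positivity
  · refine lintegral_base_le (measurable_S0 L s).ennreal_ofReal fun l => ?_
    have hmb : ∀ k, Measurable fun p : (Fin L → ℝ) × (Fin L → ℝ) =>
        ENNReal.ofReal (if l = k then 0 else
          (L : ℝ)⁻¹ * Real.exp (bb L s k (p.1, Y1 L s (p.1, l, p.2)))) := by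
      intro k
      split_ifs
      · exact measurable_const
      · have h := (measurable_bb L s k).comp (measurable_XY L s)
        have h' : Measurable fun p : (Fin L → ℝ) × (Fin L → ℝ) => (p.1, l, p.2) := by fun_prop
        exact ((h.comp h').exp.const_mul _).ennreal_ofReal
    have he : ∀ x z, ENNReal.ofReal (S0 L s (x, l, z)) = ∑ k, ENNReal.ofReal (if l = k then 0 else
          (L : ℝ)⁻¹ * Real.exp (bb L s k (x, Y1 L s (x, l, z)))) := by
      intro x z
      rw [S0, ENNReal.ofReal_sum_of_nonneg (fun k _ => by split_ifs <;> positivity)]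
    simp_rw [he]
    have h2 : ∀ x, ∫⁻ z, ∑ k, ENNReal.ofReal (if l = k then 0 else
          (L : ℝ)⁻¹ * Real.exp (bb L s k (x, Y1 L s (x, l, z)))) ∂(stdGaussian L)
        = ∑ k, ∫⁻ z, ENNReal.ofReal (if l = k then 0 else
          (L : ℝ)⁻¹ * Real.exp (bb L s k (x, Y1 L s (x, l, z)))) ∂(stdGaussian L) := by
      intro x
      have hmz : ∀ k, Measurable fun z => ENNReal.ofReal (if l = k then 0 else
          (L : ℝ)⁻¹ * Real.exp (bb L s k (x, Y1 L s (x, l, z)))) := by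
        intro k
        have hx : Measurable fun z : Fin L → ℝ => (x, z) := measurable_prodMk_left
        have h := (hmb k).comp hx
        exact h
      exact lintegral_finsetSum _ fun k _ => hmz k
    have hmb2 : ∀ k, Measurable fun x => ∫⁻ z, ENNReal.ofReal (if l = k then 0 else
          (L : ℝ)⁻¹ * Real.exp (bb L s k (x, Y1 L s (x, l, z)))) ∂(stdGaussian L) :=
      fun k => Measurable.lintegral_prod_right' (hmb k)
    simp_rw [h2]
    rw [lintegral_finsetSum _ fun k _ => hmb2 k,
      ← sum_inv_mul (L := L) (ENNReal.ofReal 2)]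
    refine Finset.sum_le_sum fun k _ => ?_
    by_cases hk : l = k
    · simp [hk]
    · simp only [if_neg hk]
      simp_rw [ENNReal.ofReal_mul (inv_nonneg.2 hLp.le), hLi]
      have hfin : (L : ℝ≥0∞)⁻¹ ≠ ∞ := by
        simpa using NeZero.ne L
      simp_rw [lintegral_const_mul' _ _ hfin]
      gcongr
      exact lintegral_off hs hL hk

lemma pointwise {L : ℕ} [NeZero L] {s θ : ℝ} (h0 : 0 < θ) (h1 : θ ≤ 1)
    {c₁ c₂ : ℝ} (hc₁ : 0 < c₁) (hc₂ : 0 < c₂) (ω) :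
    Real.log (dens L s (ω.1, Y1 L s ω)) ≤ aa L s (Y1 L s ω)
      + θ⁻¹ * (Real.log c₁ + ((1 + Real.exp (-θ * Real.log L) * T0 L s θ ω) / c₁ - 1))
      + (Real.log c₂ + ((1 + S0 L s ω) / c₂ - 1)) := by
  have hLp : (0:ℝ) < L := by exact_mod_cast Nat.pos_of_ne_zero (NeZero.ne L)
  set b := fun k => bb L s k (ω.1, Y1 L s ω) with hb
  have hS : 0 ≤ S0 L s ω := Finset.sum_nonneg fun k _ => by split_ifs <;> positivity
  set t := (L : ℝ)⁻¹ * Real.exp (b ω.2.1) with ht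
  have htp : 0 < t := by positivity
  have hT : Real.exp (-θ * Real.log L) * T0 L s θ ω = t ^ θ := by
    have : T0 L s θ ω = Real.exp (θ * b ω.2.1) := by simp [T0, hb]
    have ht' : t = Real.exp (- Real.log L + b ω.2.1) := by
      rw [ht, Real.exp_add, Real.exp_neg, Real.exp_log hLp]
    rw [this, ht', ← Real.exp_mul, ← Real.exp_add]
    ring_nf
  have hd : dens L s (ω.1, Y1 L s ω) = Real.exp (aa L s (Y1 L s ω)) * (t + S0 L s ω) := by
    have h2 : t = ∑ k, if ω.2.1 = k then (L : ℝ)⁻¹ * Real.exp (b k) else 0 := by simp [ht]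
    rw [h2, S0, ← Finset.sum_add_distrib, dens, Finset.mul_sum]
    refine Finset.sum_congr rfl fun k _ => ?_
    rw [ll_eq, Real.exp_add]
    split_ifs <;> simp only [hb] <;> ring
  rw [hd, Real.log_mul (Real.exp_pos _).ne' (by positivity), Real.log_exp, hT, add_assoc]
  gcongr
  have h3 : Real.log (t + S0 L s ω) ≤ Real.log (1 + t) + Real.log (1 + S0 L s ω) := by
    rw [← Real.log_mul (by positivity) (by positivity)]
    apply Real.log_le_log (by positivity)
    nlinarith [mul_nonneg htp.le hS]
  have h4 : Real.log (1 + t) ≤ θ⁻¹ * Real.log (1 + t ^ θ) := by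
    have h5 : (1 + t) ^ θ ≤ 1 + t ^ θ := by
      have := Real.rpow_add_le_add_rpow (zero_le_one) htp.le h0.le h1
      simpa using this
    have h6 := Real.log_le_log (by positivity) h5
    rw [Real.log_rpow (by positivity)] at h6
    rw [le_inv_mul_iff₀ h0]; exact h6
  have h7 := log_le_lin (u := 1 + t ^ θ) (by positivity) hc₁
  have h8 := log_le_lin (u := 1 + S0 L s ω) (by positivity) hc₂
  have h9 := mul_le_mul_of_nonneg_left h7 (inv_nonneg.2 h0.le)
  linarith

lemma mutualInfo_le {L : ℕ} [NeZero L] {s θ : ℝ} (hs : 0 < s) (hL : 16 * (L : ℝ) ≤ s ^ 4)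
    (hlog : (L : ℝ) / s ^ 2 ≤ 2 * Real.log L) (h0 : 0 < θ) (h1 : θ ≤ 1) :
    mutualInfo (mraJoint1 L s) ≤ θ⁻¹ * Real.log 3 + θ * Real.log L + Real.log 3 := by
  have hL1 : (1:ℝ) ≤ L := by exact_mod_cast Nat.pos_of_ne_zero (NeZero.ne L)
  have hl0 : 0 ≤ Real.log L := Real.log_nonneg hL1
  have hl3 : 0 ≤ Real.log 3 := Real.log_nonneg (by norm_num)
  rw [mutualInfo_eq hs]
  by_cases hInteg : Integrable (fun ω => Real.log (dens L s (ω.1, Y1 L s ω))) (base1 L)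
  swap
  · rw [integral_undef hInteg]; positivity
  obtain ⟨ha1, ha2⟩ := integrable_aa (L := L) hs
  obtain ⟨ht1, ht2⟩ := T0_bound hs hL hlog h0 h1
  obtain ⟨hs1, hs2⟩ := S0_bound (L := L) hs hL
  set c₁ := 3 * Real.exp (θ ^ 2 * Real.log L) with hc₁
  have hc₁p : 0 < c₁ := by positivity
  have hi1 : Integrable (fun ω => 1 + Real.exp (-θ * Real.log L) * T0 L s θ ω) (base1 L) :=
    (integrable_const _).add (ht1.const_mul _)
  have hi1' : Integrable (fun ω => (1 + Real.exp (-θ * Real.log L) * T0 L s θ ω) / c₁ - 1)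
    (base1 L) := (hi1.div_const _).sub (integrable_const _)
  have hi2 : Integrable (fun ω => 1 + S0 L s ω) (base1 L) := (integrable_const _).add hs1
  have hi2' : Integrable (fun ω => (1 + S0 L s ω) / 3 - 1) (base1 L) :=
    (hi2.div_const _).sub (integrable_const _)
  have hI1 : Integrable (fun ω => θ⁻¹ * (Real.log c₁ + ((1 + Real.exp (-θ * Real.log L) * T0 L s θ ω)
      / c₁ - 1))) (base1 L) := ((integrable_const _).add hi1').const_mul _
  have hI2 : Integrable (fun ω => Real.log 3 + ((1 + S0 L s ω) / 3 - 1)) (base1 L) :=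
    (integrable_const _).add hi2'
  have hmono := integral_mono hInteg ((ha1.add hI1).add hI2)
    (fun ω => pointwise (s := s) h0 h1 hc₁p (by norm_num : (0:ℝ) < 3) ω)
  refine hmono.trans ?_
  have e1 : ∫ ω, (1 + Real.exp (-θ * Real.log L) * T0 L s θ ω) ∂(base1 L) ≤ c₁ := by
    rw [integral_add (integrable_const _) (ht1.const_mul _), integral_const_mul]
    simp only [integral_const, probReal_univ, one_smul]
    have h2 : Real.exp (-θ * Real.log L) * ∫ ω, T0 L s θ ω ∂(base1 L)
        ≤ Real.exp (-θ * Real.log L) * (2 * Real.exp ((θ + θ ^ 2) * Real.log L)) := by gcongr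
    have h3 : Real.exp (-θ * Real.log L) * (2 * Real.exp ((θ + θ ^ 2) * Real.log L))
        = 2 * Real.exp (θ ^ 2 * Real.log L) := by
      rw [mul_left_comm, ← Real.exp_add]; ring_nf
    have h4 : 1 ≤ Real.exp (θ ^ 2 * Real.log L) := Real.one_le_exp (by positivity)
    rw [hc₁]; linarith
  have e2 : ∫ ω, (1 + S0 L s ω) ∂(base1 L) ≤ 3 := by
    rw [integral_add (integrable_const _) hs1]
    simp only [integral_const, probReal_univ, one_smul]
    linarith
  have e1' : ∫ ω, θ⁻¹ * (Real.log c₁ + ((1 + Real.exp (-θ * Real.log L) * T0 L s θ ω)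
      / c₁ - 1)) ∂(base1 L) ≤ θ⁻¹ * Real.log c₁ := by
    rw [integral_const_mul, integral_add (integrable_const _) hi1',
      integral_sub (hi1.div_const _) (integrable_const _), integral_div]
    simp only [integral_const, probReal_univ, one_smul]
    gcongr
    have := (div_le_one hc₁p).2 e1
    linarith
  have e2' : ∫ ω, (Real.log 3 + ((1 + S0 L s ω) / 3 - 1)) ∂(base1 L) ≤ Real.log 3 := by
    rw [integral_add (integrable_const _) hi2',
      integral_sub (hi2.div_const _) (integrable_const _), integral_div]
    simp only [integral_const, probReal_univ, one_smul]
    linarith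
  have e3 : θ⁻¹ * Real.log c₁ = θ⁻¹ * Real.log 3 + θ * Real.log L := by
    rw [hc₁, Real.log_mul (by norm_num) (Real.exp_pos _).ne', Real.log_exp]
    field_simp
  have e4 : ∫ ω, (((fun ω => aa L s (Y1 L s ω)) + (fun ω => θ⁻¹ * (Real.log c₁ +
      ((1 + Real.exp (-θ * Real.log L) * T0 L s θ ω) / c₁ - 1))))
      + fun ω => Real.log 3 + ((1 + S0 L s ω) / 3 - 1)) ω ∂(base1 L)
      = ∫ ω, aa L s (Y1 L s ω) ∂(base1 L) + ∫ ω, θ⁻¹ * (Real.log c₁ +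
      ((1 + Real.exp (-θ * Real.log L) * T0 L s θ ω) / c₁ - 1)) ∂(base1 L)
      + ∫ ω, (Real.log 3 + ((1 + S0 L s ω) / 3 - 1)) ∂(base1 L) := by
    rw [integral_add' (ha1.add hI1) hI2, integral_add' ha1 hI1]
  rw [e4]
  linarith

/-- mutual information at low SNR. With `σ² = L/(α log L)` and
`0 < α ≤ 2` fixed, `I(X;Y) = o(log L)`, i.e. `I(X;Y)/log L → 0`. -/
theorem mutual_info_low_snr (α : ℝ) (hα0 : 0 < α) (hα : α ≤ 2) :
    Tendsto (fun L : ℕ => mutualInfo (mraJoint1 L (sigmaAlpha L α)) / Real.log L)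
      atTop (nhds 0) := by
  have hlogt : Tendsto (fun L : ℕ => Real.log (L : ℝ)) atTop atTop :=
    Real.tendsto_log_atTop.comp tendsto_natCast_atTop_atTop
  -- eventually the noise level is large enough
  have hev : ∀ᶠ L : ℕ in atTop, 16 * (α * Real.log L) ^ 2 ≤ L := by
    have h1 : (fun x : ℝ => Real.log x ^ 2) =o[atTop] fun x => x := 
      Real.isLittleO_pow_log_id_atTop (n := 2)
    have h2 := (h1.bound (c := (16 * α ^ 2)⁻¹) (by positivity))
    have h3 := tendsto_natCast_atTop_atTop (R := ℝ) |>.eventually h2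
    filter_upwards [h3] with L hL
    simp only [Real.norm_eq_abs, abs_pow, sq_abs, Nat.abs_cast] at hL
    rw [inv_mul_eq_div, le_div_iff₀ (by positivity)] at hL
    linarith
  rw [Metric.tendsto_nhds]
  intro ε hε
  set θ := min 1 (ε / 2) with hθ
  have h0 : 0 < θ := lt_min one_pos (by linarith)
  have h1 : θ ≤ 1 := min_le_left _ _
  have h2 : θ ≤ ε / 2 := min_le_right _ _
  set C := θ⁻¹ * Real.log 3 + Real.log 3 with hC
  filter_upwards [hev, hlogt.eventually_gt_atTop (max 0 (2 * C / ε)), eventually_ge_atTop 1]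
    with L hL hlog hL1
  have hlog0 : 0 < Real.log L := (le_max_left _ _).trans_lt hlog
  have hlogC : 2 * C / ε < Real.log L := (le_max_right _ _).trans_lt hlog
  have : NeZero L := ⟨by omega⟩
  have hLp : (0:ℝ) < L := by exact_mod_cast hL1
  have hs2 : sigmaAlpha L α ^ 2 = L / (α * Real.log L) := by
    rw [sigmaAlpha, Real.sq_sqrt (by positivity)]
  have hs : 0 < sigmaAlpha L α := Real.sqrt_pos.2 (by positivity)
  have hA : 16 * (L : ℝ) ≤ sigmaAlpha L α ^ 4 := by
    have : sigmaAlpha L α ^ 4 = (sigmaAlpha L α ^ 2) ^ 2 := by ring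
    rw [this, hs2, div_pow, le_div_iff₀ (by positivity)]
    nlinarith
  have hB : (L : ℝ) / sigmaAlpha L α ^ 2 ≤ 2 * Real.log L := by
    have : (L : ℝ) / sigmaAlpha L α ^ 2 = α * Real.log L := by
      rw [hs2]; field_simp
    rw [this]; gcongr
  have hup := mutualInfo_le hs hA hB h0 h1
  have hlo := mutualInfo_nonneg (L := L) hs
  rw [Real.dist_eq, sub_zero, abs_of_nonneg (by positivity), div_lt_iff₀ hlog0]
  rw [div_lt_iff₀ hε] at hlogC
  nlinarith

end MRAformal
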